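/- arXiv:2010.06736 — 2 statements merged into one kernel-verified Lean document; each statement's English description precedes it below -/
import Mathlib

section
/- Let T be a tree in which every vertex has degree at least 2, and let B be the set of vertices of T of degree at least 3. Then for every finite nonempty set K of vertices of T, the exterior vertex boundary of K in T (vertices outside K adjacent to a vertex of K) has cardinality at least |K ∩ B| + 2. -/
/-!
Let `U` be `K` together with its exterior boundary, and write `e(S, S')` for the number of ordered
pairs in `S × S'` that are adjacent. Every neighbour of a vertex of `K` lies in `U`, so the degrees
of the vertices of `K` add up to `e(K, U)`, and inclusion-exclusion inside `U × U` gives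
`2 e(K, U) ≤ e(U, U) + e(K, K)`. A nonempty finite set `S` spans a forest, with at most `|S| - 1`
edges, so `e(S, S) ≤ 2 |S| - 2`. Applied to `U` and to `K`, this bounds the sum of the degrees by
`|U| + |K| - 2`, which is `|∂K| + 2 |K| - 2`; the sum is at least `2 |K| + |K ∩ B|`.
-/

theorem card_mul_add_card_filter_lt_le_sum {ι : Type*} {s : Finset ι} {f : ι → ℕ} {n : ℕ}
    (hf : ∀ x ∈ s, n ≤ f x) :
    s.card * n + (s.filter fun x ↦ n < f x).card ≤ ∑ x ∈ s, f x := by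
  rw [Finset.card_filter, ← smul_eq_mul, ← Finset.sum_const, ← Finset.sum_add_distrib]
  refine Finset.sum_le_sum fun x hx ↦ ?_
  have := hf x hx
  split_ifs <;> omega

section DegreeSum

open Finset SimpleGraph

variable {V : Type*} {G : SimpleGraph V}

theorem card_edgeFinset_lt_card_of_isAcyclic [Fintype V] [Nonempty V] [Fintype G.edgeSet]
    (hG : G.IsAcyclic) : #G.edgeFinset < Fintype.card V := by
  classical
  obtain ⟨F, hGF, -, hF⟩ := connected_top.exists_isTree_le_of_le_of_isAcyclic le_top hG
  have hcard : #F.edgeFinset + 1 = Fintype.card V := hF.card_edgeFinset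
  have hle : #G.edgeFinset ≤ #F.edgeFinset := card_le_card (edgeFinset_mono hGF)
  omega

section Interedges

variable [DecidableRel G.Adj]

theorem card_interedges_eq_sum (s t : Finset V) :
    #(G.interedges s t) = ∑ x ∈ s, #{y ∈ t | G.Adj x y} := by
  simp only [interedges_def, card_filter, sum_product]

theorem card_interedges_eq_sum_degree [G.LocallyFinite] {s t : Finset V}
    (hst : ∀ x ∈ s, G.neighborFinset x ⊆ t) :
    #(G.interedges s t) = ∑ x ∈ s, G.degree x := by
  rw [card_interedges_eq_sum]
  refine sum_congr rfl fun x hx ↦ ?_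
  rw [← card_neighborFinset_eq_degree]
  congr 1
  ext y
  simpa using fun hxy ↦ hst x hx ((G.mem_neighborFinset x y).2 hxy)

theorem card_interedges_self (s : Finset V) :
    #(G.interedges s s) = 2 * #(G.induce (s : Set V)).edgeFinset := by
  rw [two_mul_card_edgeFinset]
  have hinj : Function.Injective (Prod.map Subtype.val Subtype.val : s × s → V × V) :=
    Subtype.val_injective.prodMap Subtype.val_injective
  refine (card_nbij (Prod.map Subtype.val Subtype.val) ?_ hinj.injOn ?_).symm
  · simp +contextual [Set.MapsTo, mem_interedges_iff]
  · simp +contextual [Set.SurjOn, Set.subset_def, mem_interedges_iff]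

theorem two_mul_card_interedges_le_of_subset {s t : Finset V} (hst : s ⊆ t) :
    2 * #(G.interedges s t) ≤ #(G.interedges t t) + #(G.interedges s s) := by
  classical
  have hunion : G.interedges s t ∪ G.interedges t s ⊆ G.interedges t t :=
    union_subset (G.interedges_mono hst subset_rfl) (G.interedges_mono subset_rfl hst)
  have hinter : G.interedges s t ∩ G.interedges t s ⊆ G.interedges s s := by
    intro e he
    simp only [mem_inter, mem_interedges_iff] at he ⊢
    tauto
  have hcomm : #(G.interedges s t) = #(G.interedges t s) :=
    have := G.symm
    Rel.card_interedges_comm s t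
  calc 2 * #(G.interedges s t)
      = #(G.interedges s t) + #(G.interedges t s) := by rw [two_mul, ← hcomm]
    _ = #(G.interedges s t ∪ G.interedges t s) + #(G.interedges s t ∩ G.interedges t s) :=
        (card_union_add_card_inter _ _).symm
    _ ≤ #(G.interedges t t) + #(G.interedges s s) :=
        add_le_add (card_le_card hunion) (card_le_card hinter)

theorem card_interedges_self_add_two_le_of_isAcyclic (hG : G.IsAcyclic) {s : Finset V}
    (hs : s.Nonempty) : #(G.interedges s s) + 2 ≤ 2 * #s := by
  have : Nonempty (s : Set V) := hs.to_subtype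
  have hlt := card_edgeFinset_lt_card_of_isAcyclic (hG.induce (s : Set V))
  have hcard : Fintype.card (s : Set V) = #s := Fintype.card_coe s
  rw [card_interedges_self]
  omega

end Interedges

theorem sum_degree_add_two_le_of_isAcyclic [G.LocallyFinite] (hG : G.IsAcyclic) {s t : Finset V}
    (hs : s.Nonempty) (hst : s ⊆ t) (hnbr : ∀ x ∈ s, G.neighborFinset x ⊆ t) :
    ∑ x ∈ s, G.degree x + 2 ≤ #s + #t := by
  classical
  have hsum := card_interedges_eq_sum_degree hnbr
  have hincl := two_mul_card_interedges_le_of_subset (G := G) hst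
  have hs_le := card_interedges_self_add_two_le_of_isAcyclic hG hs
  have ht_le := card_interedges_self_add_two_le_of_isAcyclic hG (hs.mono hst)
  omega

end DegreeSum

theorem stmt0_general {V : Type*} (T : SimpleGraph V) [T.LocallyFinite]
    (hT : T.IsAcyclic) (K : Finset V) (hK : K.Nonempty) (hdeg : ∀ u ∈ K, 2 ≤ T.degree u) :
    (K.filter (fun u => 3 ≤ T.degree u)).card + 2 ≤
      {y : V | y ∉ K ∧ ∃ x ∈ K, T.Adj x y}.ncard := by
  classical
  let N : Finset V := K.biUnion fun x ↦ T.neighborFinset x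
  have hboundary : {y : V | y ∉ K ∧ ∃ x ∈ K, T.Adj x y} = ↑(N \ K) := by
    ext y
    simp [N, and_comm]
  have hcard : (N \ K).card + K.card = (N ∪ K).card := Finset.card_sdiff_add_card N K
  have hupper : ∑ x ∈ K, T.degree x + 2 ≤ K.card + (N ∪ K).card :=
    sum_degree_add_two_le_of_isAcyclic hT hK Finset.subset_union_right fun x hx ↦
      (Finset.subset_biUnion_of_mem (T.neighborFinset ·) hx).trans Finset.subset_union_left
  have hlower : K.card * 2 + (K.filter (fun u => 3 ≤ T.degree u)).card ≤ ∑ x ∈ K, T.degree x :=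
    card_mul_add_card_filter_lt_le_sum hdeg
  rw [hboundary, Set.ncard_coe_finset]
  omega

/-- Lemma (bound on furcations): In a tree `T` in which every vertex has degree at
least 2, with `B` the set of vertices of degree at least 3, every finite nonempty
set `K` of vertices satisfies `|Δ_v K| ≥ |K ∩ B| + 2`, where `Δ_v K` is the set of
vertices outside `K` adjacent to a vertex of `K`. -/
theorem stmt0 {V : Type*} (T : SimpleGraph V) [T.LocallyFinite]
    (htree : T.IsTree) (hdeg : ∀ u : V, 2 ≤ T.degree u)
    (K : Finset V) (hK : K.Nonempty) :
    (K.filter (fun u => 3 ≤ T.degree u)).card + 2 ≤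
      {y : V | y ∉ K ∧ ∃ x ∈ K, T.Adj x y}.ncard :=
  stmt0_general T htree.isAcyclic K hK fun u _ ↦ hdeg u
end

section
/- For d > s ≥ 1 and n ≥ 2, the number of points x on the boundary ∂B_n = B_n \ B_{n−1} of the box B_n = {−n,…,n}^d with dist(x, H) < r is at most C · n^{s−1} · r^{d−s} for a constant C depending only on d and s, where H = ℤ^s × {0}^{d−s} and dist(x,H) = max over the last d−s coordinates of |x_i| (the ℓ^∞ distance from x to H). -/
/-!
For `n ≥ 1`, the slice `|x j| = n` of an integer box `∏ i, [-R i, R i]` is empty if `n > R j`, and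
otherwise contains a proportion `2 / (2 ⌊R j⌋ + 1) < 1 / n` of the points of the box. A union bound
over `j` shows that at most a proportion `d / n` of the box has a coordinate of absolute value `n`.
The points of `∂B_n` close to `H` are of this kind, in the box with `R i = n` for `i < s` and
`R i = r` for `i ≥ s`, and that box has at most `3 ^ d * n ^ s * r ^ (d - s)` points.
-/

open Finset Fintype

section PiFinset

variable {ι : Type*} [Fintype ι] [DecidableEq ι] {α : ι → Type*}

theorem mul_card_filter_piFinset_apply_le {s : ∀ i, Finset (α i)} {c : ℕ} {j : ι}
    {p : α j → Prop} [DecidablePred p] (h : c * #{a ∈ s j | p a} ≤ #(s j)) :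
    c * #{x ∈ piFinset s | p (x j)} ≤ #(piFinset s) := by
  classical
  have slice_eq : {x ∈ piFinset s | p (x j)} =
      piFinset (Function.update s j {a ∈ s j | p a}) := by
    rw [piFinset_update_eq_filter_piFinset_mem s j (filter_subset p (s j))]
    exact filter_congr fun x hx ↦ by simp [mem_piFinset.1 hx j]
  have card_slice : #{x ∈ piFinset s | p (x j)} =
      #{a ∈ s j | p a} * ∏ i ∈ univ.erase j, #(s i) := by
    rw [slice_eq, card_piFinset, ← mul_prod_erase univ _ (mem_univ j), Function.update_self]
    exact congrArg _ (prod_congr rfl fun i hi ↦ by rw [Function.update_of_ne (ne_of_mem_erase hi)])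
  rw [card_slice, card_piFinset, ← mul_prod_erase univ _ (mem_univ j), ← mul_assoc]
  gcongr

theorem mul_card_filter_piFinset_exists_le {s : ∀ i, Finset (α i)} {c : ℕ}
    {p : ∀ i, α i → Prop} [∀ i, DecidablePred (p i)]
    (h : ∀ j, c * #{a ∈ s j | p j a} ≤ #(s j)) :
    c * #{x ∈ piFinset s | ∃ j, p j (x j)} ≤ card ι * #(piFinset s) := by
  classical
  have eq_biUnion : {x ∈ piFinset s | ∃ j, p j (x j)} =
      univ.biUnion fun j ↦ {x ∈ piFinset s | p j (x j)} := by
    ext x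
    simp
  calc c * #{x ∈ piFinset s | ∃ j, p j (x j)}
      ≤ c * ∑ j, #{x ∈ piFinset s | p j (x j)} := by
        rw [eq_biUnion]
        gcongr
        exact card_biUnion_le
    _ = ∑ j, c * #{x ∈ piFinset s | p j (x j)} := mul_sum ..
    _ ≤ ∑ _j : ι, #(piFinset s) :=
        sum_le_sum fun j _ ↦ mul_card_filter_piFinset_apply_le (h j)
    _ = card ι * #(piFinset s) := by simp

end PiFinset

section IntBox

theorem mul_card_filter_Icc_abs_eq_le (m : ℤ) (n : ℕ) :
    n * #{a ∈ Icc (-m) m | |a| = (n : ℤ)} ≤ #(Icc (-m) m) := by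
  obtain hnm | hmn := le_or_gt (n : ℤ) m
  · have card_le_two : #{a ∈ Icc (-m) m | |a| = (n : ℤ)} ≤ 2 := by
      refine (card_le_card fun a ha ↦ ?_).trans (card_le_two (a := (n : ℤ)) (b := -n))
      simpa [abs_eq] using (mem_filter.1 ha).2
    calc n * #{a ∈ Icc (-m) m | |a| = (n : ℤ)} ≤ n * 2 := by gcongr
      _ ≤ #(Icc (-m) m) := by rw [Int.card_Icc]; lia
  · have no_solution : {a ∈ Icc (-m) m | |a| = (n : ℤ)} = ∅ :=
      filter_false_of_mem fun a ha ↦ ((abs_le.2 (mem_Icc.1 ha)).trans_lt hmn).ne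
    simp [no_solution]

theorem card_Icc_neg_floor_le {R : ℝ} (hR : 1 ≤ R) : (#(Icc (-⌊R⌋) ⌊R⌋) : ℝ) ≤ 3 * R := by
  have floor_nonneg : 0 ≤ ⌊R⌋ := Int.floor_nonneg.2 (zero_le_one.trans hR)
  have card_eq : (#(Icc (-⌊R⌋) ⌊R⌋) : ℤ) = 2 * ⌊R⌋ + 1 := by
    rw [Int.card_Icc_of_le _ _ (by lia)]
    ring
  have card_eq_real : (#(Icc (-⌊R⌋) ⌊R⌋) : ℝ) = 2 * ⌊R⌋ + 1 := by exact_mod_cast card_eq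
  linarith [Int.floor_le R]

variable {ι : Type*} [Fintype ι] [DecidableEq ι] {R : ι → ℝ}

/-- The integer points of the box `∏ i, [-R i, R i]`. The side lengths are real because
the width `r` around `H` is. -/
noncomputable def intBox (R : ι → ℝ) : Finset (ι → ℤ) :=
  piFinset fun i ↦ Icc (-⌊R i⌋) ⌊R i⌋

theorem mem_intBox {x : ι → ℤ} : x ∈ intBox R ↔ ∀ i, |(x i : ℝ)| ≤ R i := by
  simp_rw [intBox, mem_piFinset, mem_Icc, ← abs_le, Int.le_floor, Int.cast_abs]

theorem card_intBox_le (hR : ∀ i, 1 ≤ R i) : (#(intBox R) : ℝ) ≤ 3 ^ card ι * ∏ i, R i := by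
  calc (#(intBox R) : ℝ) = ∏ i, (#(Icc (-⌊R i⌋) ⌊R i⌋) : ℝ) := by
        rw [intBox, card_piFinset, Nat.cast_prod]
    _ ≤ ∏ i, 3 * R i :=
        prod_le_prod (fun _ _ ↦ Nat.cast_nonneg _) fun i _ ↦ card_Icc_neg_floor_le (hR i)
    _ = 3 ^ card ι * ∏ i, R i := by rw [prod_mul_distrib, prod_const, card_univ]

/-- The points of `intBox R` having a coordinate of absolute value `n`, which model the points of
`∂B_n` in the box. The other coordinates may exceed `n`, so that this is a union of slices. -/
noncomputable def intBoxSlices (R : ι → ℝ) (n : ℕ) : Finset (ι → ℤ) :=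
  {x ∈ intBox R | ∃ j, |x j| = n}

theorem mem_intBoxSlices {n : ℕ} {x : ι → ℤ} :
    x ∈ intBoxSlices R n ↔ (∀ i, |(x i : ℝ)| ≤ R i) ∧ ∃ j, |x j| = n := by
  rw [intBoxSlices, mem_filter, mem_intBox]

theorem mul_card_intBoxSlices_le (R : ι → ℝ) (n : ℕ) :
    n * #(intBoxSlices R n) ≤ card ι * #(intBox R) :=
  mul_card_filter_piFinset_exists_le fun j ↦ mul_card_filter_Icc_abs_eq_le ⌊R j⌋ n

end IntBox

section SlabRadius

variable {d s : ℕ}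

/-- The half side lengths `a` in the directions of `H = ℤ^s × {0}^{d-s}` and `b` in the remaining
ones, so that `intBox (slabRadius d s n r)` is the part of the closed `r`-neighbourhood of `H`
whose first `s` coordinates are at most `n` in absolute value. -/
def slabRadius (d s : ℕ) (a b : ℝ) (i : Fin d) : ℝ :=
  if (i : ℕ) < s then a else b

theorem prod_slabRadius (hsd : s ≤ d) (a b : ℝ) :
    ∏ i, slabRadius d s a b i = a ^ s * b ^ (d - s) := by
  have card_lt : #{i : Fin d | (i : ℕ) < s} = s := by rw [Fin.card_filter_val_lt, min_eq_right hsd]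
  simp_rw [slabRadius]
  rw [prod_ite, prod_const, prod_const, filter_not, card_sdiff_of_subset (filter_subset _ _),
    card_lt, card_univ, Fintype.card_fin]

theorem card_intBox_slabRadius_le (hsd : s ≤ d) {a b : ℝ} (ha : 1 ≤ a) (hb : 1 ≤ b) :
    (#(intBox (slabRadius d s a b)) : ℝ) ≤ 3 ^ d * (a ^ s * b ^ (d - s)) := by
  have one_le (i : Fin d) : 1 ≤ slabRadius d s a b i := by
    unfold slabRadius
    split_ifs <;> assumption
  simpa only [Fintype.card_fin, prod_slabRadius hsd] using card_intBox_le one_le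

theorem ncard_boundary_near_le_card_intBoxSlices (d s n : ℕ) (r : ℝ) :
    {x : Fin d → ℤ | (∀ i, |x i| ≤ (n : ℤ)) ∧ ¬ (∀ i, |x i| ≤ (n : ℤ) - 1) ∧
        (∀ i : Fin d, s ≤ (i : ℕ) → (|x i| : ℝ) < r)}.ncard ≤
      #(intBoxSlices (slabRadius d s n r) n) := by
  rw [← Set.ncard_coe_finset]
  refine Set.ncard_le_ncard ?_ (finite_toSet _)
  rintro x ⟨mem_box, not_mem_inner, near⟩
  refine mem_intBoxSlices.2 ⟨fun i ↦ ?_, ?_⟩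
  · unfold slabRadius
    split_ifs with his
    · exact_mod_cast mem_box i
    · exact (near i (not_lt.1 his)).le
  · obtain ⟨j, hj⟩ := not_forall.1 not_mem_inner
    exact ⟨j, le_antisymm (mem_box j) (by lia)⟩

end SlabRadius

/-- For `d > s ≥ 1`, the number of points `x` of `∂B_n = B_n \ B_{n-1}` in `ℤ^d`
with `dist(x,H) < r` (sup-distance to `H = ℤ^s × {0}^{d-s}`, i.e. all of the
last `d-s` coordinates are `< r` in absolute value) is at most
`C n^(s-1) r^(d-s)` for a constant `C = C(d,s)`. -/
theorem stmt8 (d s : ℕ) (hs : 1 ≤ s) (hds : s < d) :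
    ∃ C : ℝ, 0 < C ∧ ∀ n : ℕ, 2 ≤ n → ∀ r : ℝ, 1 ≤ r →
      ({x : Fin d → ℤ | (∀ i, |x i| ≤ (n : ℤ)) ∧ ¬ (∀ i, |x i| ≤ (n : ℤ) - 1) ∧
          (∀ i : Fin d, s ≤ (i : ℕ) → (|x i| : ℝ) < r)}.ncard : ℝ) ≤
        C * (n : ℝ) ^ (s - 1) * r ^ (d - s) := by
  have d_pos : 0 < d := by lia
  refine ⟨d * 3 ^ d, by positivity, fun n hn r hr ↦ ?_⟩
  have one_le_n : (1 : ℝ) ≤ n := by exact_mod_cast one_le_two.trans hn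
  refine le_of_mul_le_mul_left ?_ (zero_lt_one.trans_le one_le_n)
  calc (n : ℝ) * _ ≤ n * #(intBoxSlices (slabRadius d s n r) n) := by
        gcongr
        exact ncard_boundary_near_le_card_intBoxSlices d s n r
    _ ≤ d * #(intBox (slabRadius d s n r)) := by
        exact_mod_cast Fintype.card_fin d ▸ mul_card_intBoxSlices_le (slabRadius d s n r) n
    _ ≤ d * (3 ^ d * (n ^ s * r ^ (d - s))) := by
        gcongr
        exact card_intBox_slabRadius_le hds.le one_le_n hr
    _ = n * (d * 3 ^ d * n ^ (s - 1) * r ^ (d - s)) := by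
        rw [← mul_pow_sub_one (Nat.one_le_iff_ne_zero.1 hs) (n : ℝ)]
        ring
end
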